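/- arXiv:1707.05029 — 2 statements merged into one kernel-verified Lean document; each statement's English description precedes it below -/
import Mathlib

section
/- The ℤ-lattice of integral Cayley numbers 𝒪 spanned by the Coxeter basis e₀, e₁, e₂, e₄, (e₁+e₂+e₃−e₄)/2, (e₅−e₀−e₁−e₄)/2, (e₆−e₀+e₁−e₂)/2, (e₂−e₀+e₄−e₇)/2, equipped with the quadratic form N, is an even unimodular positive definite lattice of rank 8 (hence isometric to E₈). -/
open scoped BigOperators

/-- The Cayley numbers (octonions) as coordinate vectors w.r.t. the basis `e₀,…,e₇`. -/
abbrev Octo := Fin 8 → ℝ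

/-- Sign table of the octonion multiplication: `eᵢeⱼ = octSign i j • e_{octIdx i j}`. -/
def octSign : Matrix (Fin 8) (Fin 8) ℝ :=
  !![1, 1, 1, 1, 1, 1, 1, 1; 1, -1, 1, 1, -1, 1, -1, -1; 1, -1, -1, 1, 1, -1, 1, -1;
     1, -1, -1, -1, 1, 1, -1, 1; 1, 1, -1, -1, -1, 1, 1, -1; 1, -1, 1, -1, -1, -1, 1, 1;
     1, 1, -1, 1, -1, -1, -1, 1; 1, 1, 1, -1, 1, -1, -1, -1]

/-- Index table of the octonion multiplication. -/
def octIdx : Matrix (Fin 8) (Fin 8) (Fin 8) :=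
  !![0, 1, 2, 3, 4, 5, 6, 7; 1, 0, 4, 7, 2, 6, 5, 3; 2, 4, 0, 5, 1, 3, 7, 6;
     3, 7, 5, 0, 6, 2, 4, 1; 4, 2, 1, 6, 0, 7, 3, 5; 5, 6, 3, 2, 7, 0, 1, 4;
     6, 5, 7, 4, 3, 1, 0, 2; 7, 3, 6, 1, 5, 4, 2, 0]

/-- Octonion multiplication, given by the structure constants encoded in
`octSign` and `octIdx` (satisfying `e₁e₂e₄ = … = -e₀`). -/
def octMul (x y : Octo) : Octo := fun k =>
  ∑ i : Fin 8, ∑ j : Fin 8, x i * y j * octSign i j * (if octIdx i j = k then 1 else 0)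

/-- The basis vectors `e₀,…,e₇`. -/
def octE (i : Fin 8) : Octo := fun j => if j = i then 1 else 0

/-- The real part `Re(x) = x₀`. -/
def octRe (x : Octo) : ℝ := x 0

/-- The involution `x ↦ x̄ = 2 Re(x) e₀ - x`. -/
def octConj (x : Octo) : Octo := (2 * octRe x) • octE 0 - x

/-- The norm `N(x) = Σⱼ xⱼ²`. -/
def octN (x : Octo) : ℝ := ∑ j : Fin 8, (x j) ^ 2

/-- The bilinear form `σ(a,b) = āb + b̄a` (a real number, read off as the `e₀`-coordinate). -/
noncomputable def octSigma (a b : Octo) : ℝ :=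
  (octMul (octConj a) b + octMul (octConj b) a) 0

/-- The Coxeter basis of the integral Cayley numbers. -/
noncomputable def cox : Fin 8 → Octo :=
  ![octE 0, octE 1, octE 2, octE 4,
    (1 / 2 : ℝ) • (octE 1 + octE 2 + octE 3 - octE 4),
    (1 / 2 : ℝ) • (octE 5 - octE 0 - octE 1 - octE 4),
    (1 / 2 : ℝ) • (octE 6 - octE 0 + octE 1 - octE 2),
    (1 / 2 : ℝ) • (octE 2 - octE 0 + octE 4 - octE 7)]

/-- The lattice `𝒪` of integral Cayley numbers: the `ℤ`-span of the Coxeter basis. -/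
noncomputable def OLat : Submodule ℤ Octo := Submodule.span ℤ (Set.range cox)

theorem octSigma_eq (a b : Octo) : octSigma a b = 2 * ∑ i, a i * b i := by
  simp [octSigma, octMul, octConj, octRe, octE, octSign, octIdx, Fin.sum_univ_eight]
  ring

/-- Column reordering that makes the Coxeter basis lower triangular. -/
def coxPerm : Fin 8 → Fin 8 := ![0, 1, 2, 4, 3, 5, 6, 7]

/-- The triangular matrix of the Coxeter basis. -/
noncomputable def coxMat : Matrix (Fin 8) (Fin 8) ℝ := Matrix.of fun i j => cox i (coxPerm j)

theorem coxMat_det : coxMat.det = -(1 / 16) := by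
  rw [Matrix.det_of_lowerTriangular]
  · simp [coxMat, coxPerm, cox, octE, Fin.prod_univ_eight]
    norm_num
  · intro i j h
    have h : i < j := h
    fin_cases i <;> fin_cases j <;> first
      | (exfalso; revert h; decide)
      | simp [coxMat, coxPerm, cox, octE]

theorem gram_eq : (Matrix.of fun i j => octSigma (cox i) (cox j)) =
    (2 : ℝ) • (coxMat * coxMat.transpose) := by
  ext i j
  simp [octSigma_eq, Matrix.mul_apply, coxMat, coxPerm, Fin.sum_univ_eight]
  ring

theorem cox_linearIndependent : LinearIndependent ℝ cox := by
  have h : LinearIndependent ℝ coxMat.row :=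
    Matrix.linearIndependent_rows_of_det_ne_zero (A := coxMat) (by rw [coxMat_det]; norm_num)
  exact LinearIndependent.of_comp (LinearMap.funLeft ℝ ℝ coxPerm) h

theorem octSigma_even (v : Octo) (hv : v ∈ OLat) : ∃ k : ℤ, octSigma v v = 2 * (k : ℝ) := by
  obtain ⟨c, rfl⟩ := (Submodule.mem_span_range_iff_exists_fun ℤ).1 hv
  refine ⟨c 0 ^ 2 + c 1 ^ 2 + c 2 ^ 2 + c 3 ^ 2 + c 4 ^ 2 + c 5 ^ 2 + c 6 ^ 2 + c 7 ^ 2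
    + c 4 * (c 1 + c 2 - c 3) - c 5 * (c 0 + c 1 + c 3) + c 6 * (c 1 - c 0 - c 2)
    + c 7 * (c 2 + c 3 - c 0), ?_⟩
  rw [octSigma_eq]
  simp [cox, octE, Fin.sum_univ_eight]
  ring

theorem octN_pos (v : Octo) (hv : v ≠ 0) : 0 < octN v := by
  obtain ⟨i, hi⟩ := Function.ne_iff.1 hv
  have hi : v i ≠ 0 := hi
  exact Finset.sum_pos' (fun j _ => sq_nonneg _) ⟨i, Finset.mem_univ _, by positivity⟩

theorem gram_det : Matrix.det (Matrix.of fun i j => octSigma (cox i) (cox j)) = 1 := by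
  rw [gram_eq, Matrix.det_smul, Matrix.det_mul, Matrix.det_transpose, coxMat_det]
  norm_num

/-- The integral Cayley numbers `𝒪` with the quadratic form `N` form an even unimodular
positive definite lattice of rank 8: the Coxeter basis is linearly independent (rank 8),
`σ(v,v) = 2N(v)` is an even integer on `𝒪`, `N` is positive definite, and the Gram matrix
of `σ` in the Coxeter basis has determinant 1. -/
theorem OLat_even_unimodular_posDef :
    LinearIndependent ℝ cox ∧
    (∀ v ∈ OLat, ∃ k : ℤ, octSigma v v = 2 * (k : ℝ)) ∧
    (∀ v : Octo, v ≠ 0 → 0 < octN v) ∧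
    Matrix.det (Matrix.of fun i j => octSigma (cox i) (cox j)) = 1 := by
  exact ⟨cox_linearIndependent, octSigma_even, octN_pos, gram_det⟩
end

section
/- The number of integral Cayley numbers of norm n equals 240·σ₃(n) for every positive integer n, where σ₃(n) = Σ_{d|n} d³. In particular, there are exactly 240 elements of norm 1. -/
open scoped BigOperators

namespace E8

open Complex ModularForm Matrix.SpecialLinearGroup
open UpperHalfPlane hiding I
open scoped Real MatrixGroups

/-- the one-variable theta summand -/
noncomputable def F (τ : ℂ) (n : ℤ) : ℂ := cexp (π * I * (n : ℂ) ^ 2 * (τ / 2))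

/-- even part -/
noncomputable def thA (τ : ℂ) : ℂ := jacobiTheta (2 * τ)

/-- odd part -/
noncomputable def thB (τ : ℂ) : ℂ := jacobiTheta (τ / 2) - jacobiTheta (2 * τ)

lemma hasSum_theta {τ : ℂ} (hτ : 0 < τ.im) :
    HasSum (fun n : ℤ => cexp (π * I * (n : ℂ) ^ 2 * τ)) (jacobiTheta τ) := by
  have h := hasSum_jacobiTheta₂_term 0 hτ
  rw [← jacobiTheta_eq_jacobiTheta₂] at h
  simpa [jacobiTheta₂_term] using h

lemma hasSum_even {τ : ℂ} (hτ : 0 < τ.im) :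
    HasSum (fun n : ℤ => if (n : ZMod 2) = 0 then F τ n else 0) (thA τ) := by
  have h1 : 0 < (2 * τ).im := by simpa using hτ
  have hinj : Function.Injective (fun n : ℤ => 2 * n) := fun a b h => by
    simpa using h
  rw [← hinj.hasSum_iff]
  · unfold thA
    convert hasSum_theta h1 using 2 with n
    have : ((2 : ℤ) : ZMod 2) = 0 := by decide
    simp only [Function.comp, Int.cast_mul, this, zero_mul, if_true, F]
    congr 1
    push_cast
    ring
  · intro n hn
    rw [if_neg]
    intro h
    rw [ZMod.intCast_zmod_eq_zero_iff_dvd] at h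
    obtain ⟨k, hk⟩ := h
    exact hn ⟨k, by simpa using hk.symm⟩

lemma hasSum_odd {τ : ℂ} (hτ : 0 < τ.im) :
    HasSum (fun n : ℤ => if (n : ZMod 2) = 1 then F τ n else 0) (thB τ) := by
  have h1 : 0 < (τ / 2).im := by simpa using hτ
  have h := (hasSum_theta h1).sub (hasSum_even hτ)
  unfold thB
  have heq : (fun n : ℤ => if (n : ZMod 2) = 1 then F τ n else 0) =
      fun n : ℤ => cexp (π * I * (n : ℂ) ^ 2 * (τ / 2)) - if (n : ZMod 2) = 0 then F τ n else 0 := by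
    funext n
    have : ∀ x : ZMod 2, x = 0 ∨ x = 1 := by decide
    rcases this (n : ZMod 2) with h | h <;> simp [h, F]
  rw [heq]
  exact h

lemma hasSum_part {τ : ℂ} (hτ : 0 < τ.im) (c : ZMod 2) :
    HasSum (fun n : ℤ => if (n : ZMod 2) = c then F τ n else 0)
      (if c = 0 then thA τ else thB τ) := by
  have : ∀ x : ZMod 2, x = 0 ∨ x = 1 := by decide
  rcases this c with rfl | rfl
  · simpa using hasSum_even hτ
  · simpa using hasSum_odd hτ

lemma hasSum_pi : ∀ (k : ℕ) (f : Fin k → ℤ → ℂ) (s : Fin k → ℂ), (∀ i, HasSum (f i) (s i)) →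
    HasSum (fun v : Fin k → ℤ => ∏ i, f i (v i)) (∏ i, s i) := by
  intro k
  induction k with
  | zero =>
    intro f s _
    simp
  | succ k ih =>
    intro f s h
    have h1 := ih (fun i => f i.succ) (fun i => s i.succ) (fun i => h i.succ)
    have n0 : Summable (fun n => ‖f 0 n‖) := (h 0).summable.norm
    have n1 : Summable (fun v : Fin k → ℤ => ‖∏ i, f i.succ (v i)‖) := h1.summable.norm
    have n2 : Summable (fun x : ℤ × (Fin k → ℤ) => f 0 x.1 * ∏ i : Fin k, f i.succ (x.2 i)) :=
      summable_mul_of_summable_norm (f := f 0)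
        (g := fun v : Fin k → ℤ => ∏ i : Fin k, f i.succ (v i)) n0 n1
    have h2 := (h 0).mul h1 n2
    rw [← (Fin.consEquiv (fun _ : Fin (k + 1) => ℤ)).hasSum_iff]
    simp only [Fin.prod_univ_succ]
    exact h2

/-- codeword -/
def word (x : ZMod 2 × ZMod 2 × ZMod 2 × ZMod 2) : Fin 8 → ZMod 2 :=
  ![x.2.1 + x.2.2.1 + x.2.2.2, x.1 + x.2.1 + x.2.2.1, x.1 + x.2.2.1 + x.2.2.2, x.1,
    x.1 + x.2.1 + x.2.2.2, x.2.1, x.2.2.1, x.2.2.2]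

/-- twice the lattice -/
def L : Set (Fin 8 → ℤ) := {v | ∃ x, ∀ i, (v i : ZMod 2) = word x i}

lemma word_inj : Function.Injective word := by
  intro x y h
  have h3 := congrFun h 3
  have h5 := congrFun h 5
  have h6 := congrFun h 6
  have h7 := congrFun h 7
  simp [word] at h3 h5 h6 h7
  ext <;> assumption

/-- theta function of the lattice -/
noncomputable def Th (τ : ℂ) : ℂ := thA τ ^ 8 + 14 * thA τ ^ 4 * thB τ ^ 4 + thB τ ^ 8

lemma sum_word (a b : ℂ) : ∑ x, ∏ i, (if word x i = 0 then a else b)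
    = a ^ 8 + 14 * a ^ 4 * b ^ 4 + b ^ 8 := by
  have h2 : ∀ f : ZMod 2 → ℂ, ∑ x, f x = f 0 + f 1 := fun f => Fin.sum_univ_two f
  have h11 : (1 : ZMod 2) + 1 = 0 := by decide
  simp only [Fintype.sum_prod_type, h2, Fin.prod_univ_eight, word]
  simp [h11]
  ring

open Classical in
lemma hasSum_L {τ : ℂ} (hτ : 0 < τ.im) :
    HasSum (fun v : Fin 8 → ℤ => if v ∈ L then ∏ i, F τ (v i) else 0) (Th τ) := by
  have h := hasSum_sum (s := Finset.univ) (fun x _ => hasSum_pi 8 _ _ (fun i => hasSum_part hτ (word x i)))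
  rw [sum_word] at h
  unfold Th
  convert h using 2 with v
  simp only [Finset.prod_ite_zero, Finset.mem_univ, true_imp_iff]
  split_ifs with hv
  · obtain ⟨x, hx⟩ := hv
    rw [Finset.sum_eq_single x]
    · rw [if_pos hx]
    · intro y _ hy
      rw [if_neg]
      intro hy'
      exact hy (word_inj (funext fun i => (hy' i).symm.trans (hx i)))
    · simp
  · rw [Finset.sum_eq_zero]
    intro x _
    rw [if_neg]
    exact fun hx => hv ⟨x, hx⟩

lemma norm_L {v : Fin 8 → ℤ} (hv : v ∈ L) : ∃ n : ℕ, ∑ i, v i ^ 2 = 4 * (n : ℤ) := by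
  obtain ⟨x, hx⟩ := hv
  have key : (4 : ℤ) ∣ ∑ i, v i ^ 2 := by
    have hsq : ∀ n : ℤ, ((n ^ 2 : ℤ) : ZMod 4) = if (n : ZMod 2) = 0 then 0 else 1 := by
      intro n
      split_ifs with h
      · rw [ZMod.intCast_zmod_eq_zero_iff_dvd] at h
        obtain ⟨k, rfl⟩ := h
        rw [ZMod.intCast_zmod_eq_zero_iff_dvd]
        exact ⟨k ^ 2, by push_cast; ring⟩
      · have h' : n % 2 = 1 := by
          by_contra hc
          apply h
          rw [ZMod.intCast_zmod_eq_zero_iff_dvd]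
          push_cast
          omega
        have e : n ^ 2 = 4 * ((n / 2) ^ 2 + n / 2) + 1 := by
          have : n = 2 * (n / 2) + 1 := by omega
          generalize n / 2 = k at *
          subst this
          ring
        rw [e]
        push_cast
        rw [show (4 : ZMod 4) = 0 by decide]
        ring
    have : (((∑ i, v i ^ 2 : ℤ)) : ZMod 4) = 0 := by
      rw [Int.cast_sum]
      simp only [hsq, hx]
      clear hx
      revert x
      decide
    rw [ZMod.intCast_zmod_eq_zero_iff_dvd] at this
    exact_mod_cast this
  obtain ⟨m, hm⟩ := key
  have h0 : 0 ≤ ∑ i, v i ^ 2 := Finset.sum_nonneg fun i _ => sq_nonneg _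
  exact ⟨m.toNat, by omega⟩

/-- vectors of given norm -/
def R (n : ℕ) : Set (Fin 8 → ℤ) := {v | v ∈ L ∧ ∑ i, v i ^ 2 = 4 * (n : ℤ)}

lemma R_finite (n : ℕ) : (R n).Finite := by
  apply (Set.finite_Icc (fun _ : Fin 8 => -(4 * n : ℤ)) (fun _ => (4 * n : ℤ))).subset
  rintro v ⟨-, hv⟩
  have h : ∀ i, v i ^ 2 ≤ 4 * n := fun i => by
    rw [← hv]
    exact Finset.single_le_sum (f := fun i => v i ^ 2) (fun j _ => sq_nonneg _) (Finset.mem_univ i)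
  constructor <;> intro i <;> have := h i <;> simp only <;> nlinarith

lemma prod_F (τ : ℂ) {v : Fin 8 → ℤ} {n : ℕ} (h : ∑ i, v i ^ 2 = 4 * (n : ℤ)) :
    ∏ i, F τ (v i) = Function.Periodic.qParam 1 τ ^ n := by
  simp only [F, ← Complex.exp_sum, Function.Periodic.qParam, ← Complex.exp_nat_mul]
  congr 1
  rw [← Finset.sum_mul, ← Finset.mul_sum]
  have : ∑ i, ((v i : ℂ)) ^ 2 = 4 * n := by exact_mod_cast h
  rw [this]
  push_cast
  ring

open Classical in
lemma hasSum_q {τ : ℂ} (hτ : 0 < τ.im) :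
    HasSum (fun n : ℕ => ((R n).ncard : ℂ) • Function.Periodic.qParam 1 τ ^ n) (Th τ) := by
  have h := hasSum_L hτ
  have h' : HasSum (fun v : L => ∏ i, F τ (v.1 i)) (Th τ) := by
    have hs : HasSum (L.indicator (fun v => ∏ i, F τ (v i))) (Th τ) := by
      convert h using 1
      funext v
      simp [Set.indicator_apply]
    exact hasSum_subtype_iff_indicator.mpr hs
  choose ν hν using fun v : L => norm_L v.2
  rw [← (Equiv.sigmaFiberEquiv ν).hasSum_iff] at h'
  refine h'.sigma fun n => ?_
  have e : {v : L // ν v = n} ≃ R n :=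
    { toFun := fun v => ⟨v.1.1, v.1.2, by rw [hν, v.2]⟩
      invFun := fun v => ⟨⟨v.1, v.2.1⟩, by
        have := (hν ⟨v.1, v.2.1⟩).symm.trans v.2.2
        simpa using this⟩
      left_inv := fun v => rfl
      right_inv := fun v => rfl }
  have := (R_finite n).to_subtype
  have : Finite {v : L // ν v = n} := Finite.of_equiv _ e.symm
  have := Fintype.ofFinite {v : L // ν v = n}
  convert hasSum_fintype _ using 1
  rw [Finset.sum_congr rfl (g := fun _ => Function.Periodic.qParam 1 τ ^ n)]
  · rw [Finset.sum_const, Finset.card_univ, ← Nat.card_eq_fintype_card, Nat.card_congr e,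
      Nat.card_coe_set_eq]
    simp
  · rintro ⟨v, hv⟩ _
    simp only [Function.comp]
    subst hv
    exact prod_F τ (hν v)

lemma theta_S {τ : ℂ} (hτ : 0 < τ.im) :
    jacobiTheta (-1 / τ) = (-I * τ) ^ (1 / 2 : ℂ) * jacobiTheta τ := by
  have h := jacobiTheta_S_smul ⟨τ, hτ⟩
  rw [UpperHalfPlane.modular_S_smul] at h
  simpa [neg_div, inv_neg] using h

lemma sqrt_four {z : ℂ} (hz : z ≠ 0) : (4 * z) ^ (1 / 2 : ℂ) = 2 * z ^ (1 / 2 : ℂ) := by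
  have h4 : (4 : ℂ) * z ≠ 0 := by simpa using hz
  rw [cpow_def_of_ne_zero h4, cpow_def_of_ne_zero hz]
  have := Complex.log_ofReal_mul (r := 4) (by norm_num) hz
  push_cast at this
  rw [this, add_mul, Complex.exp_add]
  congr 1
  have e : Real.log 4 = 2 * Real.log 2 := by
    rw [show (4 : ℝ) = 2 ^ 2 by norm_num, Real.log_pow]; norm_num
  rw [e]
  rw [show ((2 * Real.log 2 : ℝ) : ℂ) * (1 / 2) = ((Real.log 2 : ℝ) : ℂ) by push_cast; ring,
    ← Complex.ofReal_exp, Real.exp_log (by norm_num)]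
  norm_num

lemma Th_S {τ : ℂ} (hτ : 0 < τ.im) : Th (-1 / τ) = τ ^ 4 * Th τ := by
  have h0 : τ ≠ 0 := by rintro rfl; simp at hτ
  have h1 : 0 < (τ / 2).im := by simpa using hτ
  have h2 : 0 < (2 * τ).im := by simpa using hτ
  set s : ℂ := (-I * (τ / 2)) ^ (1 / 2 : ℂ) with hs
  have hs2 : s ^ 2 = -I * (τ / 2) := by
    rw [hs, ← Complex.cpow_nat_mul]; norm_num
  have hA : thA (-1 / τ) = s * (thA τ + thB τ) := by
    have := theta_S h1
    unfold thA thB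
    rw [show 2 * (-1 / τ) = -1 / (τ / 2) by field_simp, this, ← hs]
    ring
  have hB : thB (-1 / τ) = s * (thA τ - thB τ) := by
    have h3 := theta_S h2
    have h4 := sqrt_four (z := -I * (τ / 2)) (by simp [h0])
    rw [show 4 * (-I * (τ / 2)) = -I * (2 * τ) by ring, ← hs] at h4
    have hA' : jacobiTheta (2 * (-1 / τ)) = _ := hA
    unfold thB at *
    unfold thA at *
    rw [hA', show -1 / τ / 2 = -1 / (2 * τ) by field_simp, h3, h4]
    ring
  have hs8 : s ^ 8 = τ ^ 4 / 16 := by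
    rw [show s ^ 8 = (s ^ 2) ^ 4 by ring, hs2, mul_pow, neg_pow, I_pow_four]
    ring
  unfold Th
  rw [hA, hB]
  generalize thA τ = a
  generalize thB τ = b
  linear_combination (16 * (a ^ 8 + 14 * a ^ 4 * b ^ 4 + b ^ 8)) * hs8

/-- restricted to the upper half plane -/
noncomputable def ThH (τ : ℍ) : ℂ := Th τ

lemma ThH_S : (ThH ∣[(4 : ℤ)] ModularGroup.S) = ThH := by
  ext z
  suffices ThH (ModularGroup.S • z) * ((z : ℂ) ^ 4)⁻¹ = ThH z by
    rw [SL_slash_apply]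
    rw [ModularGroup.denom_S]
    simpa using this
  have := Th_S z.2
  rw [UpperHalfPlane.modular_S_smul]
  simp only [ThH]
  have e : ((-(z : ℂ))⁻¹) = -1 / (z : ℂ) := by rw [inv_neg, neg_div, one_div]
  simp only [e]
  erw [this]
  field_simp [z.ne_zero]

lemma ThH_T : (ThH ∣[(4 : ℤ)] ModularGroup.T) = ThH := by
  ext z
  suffices ThH (ModularGroup.T • z) = ThH z by
    rw [SL_slash_apply]
    have hd : denom (ModularGroup.T : GL (Fin 2) ℝ) z = 1 := by
      rw [ModularGroup.denom_apply]
      simp [ModularGroup.T]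
    rw [hd]
    simpa using this
  have h1 := hasSum_q (ModularGroup.T • z).2
  have h2 := hasSum_q z.2
  refine h1.unique ?_
  have e : Function.Periodic.qParam 1 ((ModularGroup.T • z : ℍ) : ℂ)
      = Function.Periodic.qParam 1 (z : ℂ) := by
    rw [UpperHalfPlane.modular_T_smul, UpperHalfPlane.coe_vadd]
    simp only [Function.Periodic.qParam]
    rw [← Complex.exp_periodic (2 * π * I * z / (1 : ℝ))]
    congr 1
    push_cast
    ring
  rw [e]
  exact h2

lemma ThH_bdd : IsBoundedAtImInfty ThH :=
  isBoundedAtImInfty_of_hasSum_qExpansion (h := 1) one_pos fun τ => hasSum_q τ.2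

/-- the theta series as a modular form -/
noncomputable def ThMF : ModularForm 𝒮ℒ 4 where
  toFun := ThH
  slash_action_eq' A hA := by
    obtain ⟨A, rfl⟩ := hA
    exact SlashInvariantForm.slash_action_generators_SL2Z ThH_S ThH_T A
  holo' := by
    rw [UpperHalfPlane.mdifferentiable_iff]
    have hd : ∀ z : ℂ, 0 < z.im → DifferentiableAt ℂ Th z := by
      intro z hz
      have h1 : DifferentiableAt ℂ (fun z : ℂ => jacobiTheta (z / 2)) z :=
        DifferentiableAt.comp (g := jacobiTheta) (f := fun z : ℂ => z / 2) z
          (differentiableAt_jacobiTheta (τ := z / 2) (by simpa using hz))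
          (show DifferentiableAt ℂ (fun z : ℂ => z / 2) z by fun_prop)
      have h2 : DifferentiableAt ℂ (fun z : ℂ => jacobiTheta (2 * z)) z :=
        DifferentiableAt.comp (g := jacobiTheta) (f := fun z : ℂ => 2 * z) z
          (differentiableAt_jacobiTheta (τ := 2 * z) (by simpa using hz))
          (show DifferentiableAt ℂ (fun z : ℂ => 2 * z) z by fun_prop)
      unfold Th thA thB
      fun_prop
    refine .congr (fun z hz ↦ (hd z hz).differentiableWithinAt) fun z hz ↦ ?_
    simp [ThH, ofComplex_apply_of_im_pos hz]
  bdd_at_cusps' hc := by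
    rw [Subgroup.IsArithmetic.isCusp_iff_isCusp_SL2Z] at hc
    rw [OnePoint.isBoundedAt_iff_forall_SL2Z hc]
    intro γ _
    rw [SlashInvariantForm.slash_action_generators_SL2Z ThH_S ThH_T]
    exact ThH_bdd

lemma coeff_Th (n : ℕ) : ((R n).ncard : ℂ) = (qExpansion 1 ThMF).coeff n :=
  ModularFormClass.qExpansion_coeff_unique (Γ := 𝒮ℒ) (k := 4) (f := ThMF) one_pos
    one_mem_strictPeriods_SL (fun τ => hasSum_q τ.2) n

lemma R_zero : R 0 = {0} := by
  ext v
  constructor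
  · rintro ⟨-, h⟩
    simp only [Nat.cast_zero, mul_zero] at h
    rw [Finset.sum_eq_zero_iff_of_nonneg (fun i _ => sq_nonneg _)] at h
    ext i
    simpa using h i (Finset.mem_univ i)
  · rintro rfl
    refine ⟨⟨0, ?_⟩, by simp⟩
    have : ∀ i, (0 : ZMod 2) = word 0 i := by decide
    simpa using this

/-- weight four Eisenstein series -/
noncomputable def E4 : ModularForm 𝒮ℒ 4 := ModularForm.E (k := 4) (by norm_num)

lemma coeff_E4 (n : ℕ) : (qExpansion 1 E4).coeff n =
    if n = 0 then 1 else 240 * (ArithmeticFunction.sigma 3 n : ℂ) := by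
  have := EisensteinSeries.E_qExpansion_coeff (k := 4) (by norm_num) (by decide) n
  unfold E4
  erw [this]
  have hb : bernoulli 4 = -1 / 30 := by
    rw [bernoulli_eq_bernoulli'_of_ne_one (by norm_num), bernoulli'_four]
  rw [hb]
  norm_num

lemma Th_eq : ThMF = E4 := by
  rw [← sub_eq_zero]
  apply sturm_bound_levelOne
  have h : qExpansion 1 (ThMF - E4) = qExpansion 1 ThMF - qExpansion 1 E4 :=
    ModularForm.qExpansion_sub one_pos one_mem_strictPeriods_SL ThMF E4
  have h0 : (qExpansion 1 (ThMF - E4)).coeff 0 = 0 := by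
    rw [h, map_sub, ← coeff_Th, coeff_E4, R_zero]
    simp
  have : (((4 : ℤ).toNat / 12 : ℕ) : ℕ∞) = 0 := by norm_num
  rw [this]
  refine lt_of_lt_of_le zero_lt_one
    (PowerSeries.one_le_order_iff_constCoeff_eq_zero.mpr ?_)
  rw [← PowerSeries.coeff_zero_eq_constantCoeff]
  exact h0

lemma card_R {n : ℕ} (hn : 0 < n) : (R n).ncard = 240 * ∑ d ∈ n.divisors, d ^ 3 := by
  have := coeff_Th n
  rw [Th_eq, coeff_E4, if_neg hn.ne', ArithmeticFunction.sigma_apply] at this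
  exact_mod_cast this

/-- halving -/
noncomputable def half (v : Fin 8 → ℤ) : Octo := fun i => (v i : ℝ) / 2

lemma half_inj : Function.Injective half := by
  intro v w h
  ext i
  have := congrFun h i
  simp only [half] at this
  have : (v i : ℝ) = w i := by linarith
  exact_mod_cast this

/-- coordinates of a combination of the Coxeter basis, doubled -/
def dbl (k : Fin 8 → ℤ) : Fin 8 → ℤ :=
  ![2 * k 0 - k 5 - k 6 - k 7, 2 * k 1 + k 4 - k 5 + k 6, 2 * k 2 + k 4 - k 6 + k 7, k 4,
    2 * k 3 - k 4 - k 5 + k 7, k 5, k 6, - k 7]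

lemma comb (k : Fin 8 → ℤ) : ∑ i, k i • cox i = half (dbl k) := by
  ext j
  fin_cases j <;>
  simp [Fin.sum_univ_eight, cox, octE, half, dbl] <;> ring

lemma dbl_mem (k : Fin 8 → ℤ) : dbl k ∈ L := by
  refine ⟨((k 4 : ZMod 2), (k 5 : ZMod 2), (k 6 : ZMod 2), (k 7 : ZMod 2)), fun i => ?_⟩
  have h2 : (2 : ZMod 2) = 0 := by decide
  have hneg : ∀ x : ZMod 2, -x = x := by decide
  fin_cases i <;> simp [dbl, word, h2, sub_eq_add_neg, hneg]

lemma mem_dbl {v : Fin 8 → ℤ} (hv : v ∈ L) : ∃ k, dbl k = v := by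
  obtain ⟨x, hx⟩ := hv
  have cong : ∀ a b : ℤ, (a : ZMod 2) = (b : ZMod 2) → ∃ m, a = 2 * m + b := by
    intro a b h
    rw [← sub_eq_zero, ← Int.cast_sub, ZMod.intCast_zmod_eq_zero_iff_dvd] at h
    obtain ⟨m, hm⟩ := h
    exact ⟨m, by push_cast at hm; linarith⟩
  have h := fun i => hx i
  have hneg : ∀ x : ZMod 2, -x = x := by decide
  obtain ⟨a, ha⟩ := cong (v 0) (-v 5 - v 6 + v 7) (by
    simp [hx, word, sub_eq_add_neg, hneg])
  obtain ⟨b, hb⟩ := cong (v 1) (v 3 - v 5 + v 6) (by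
    simp [hx, word, sub_eq_add_neg, hneg])
  obtain ⟨c, hc⟩ := cong (v 2) (v 3 - v 6 - v 7) (by
    simp [hx, word, sub_eq_add_neg, hneg])
  obtain ⟨d, hd⟩ := cong (v 4) (-v 3 - v 5 - v 7) (by
    simp [hx, word, sub_eq_add_neg, hneg])
  refine ⟨![a, b, c, d, v 3, v 5, v 6, -v 7], ?_⟩
  ext i
  fin_cases i <;> simp [dbl] <;> linarith

lemma mem_OLat (t : Octo) : t ∈ OLat ↔ ∃ v ∈ L, half v = t := by
  unfold OLat
  rw [Submodule.mem_span_range_iff_exists_fun]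
  constructor
  · rintro ⟨k, rfl⟩
    exact ⟨_, dbl_mem k, (comb k).symm⟩
  · rintro ⟨v, hv, rfl⟩
    obtain ⟨k, rfl⟩ := mem_dbl hv
    exact ⟨k, comb k⟩

lemma norm_half (v : Fin 8 → ℤ) (n : ℕ) : octN (half v) = n ↔ ∑ i, v i ^ 2 = 4 * (n : ℤ) := by
  have h : octN (half v) = ((∑ i, v i ^ 2 : ℤ) : ℝ) / 4 := by
    simp only [octN, half, Int.cast_sum, Finset.sum_div]
    refine Finset.sum_congr rfl fun i _ => ?_
    push_cast
    ring
  rw [h, div_eq_iff (by norm_num), mul_comm]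
  exact_mod_cast Iff.rfl

lemma card_set {n : ℕ} (hn : 0 < n) :
    {t : Octo | t ∈ OLat ∧ octN t = n}.ncard = 240 * ∑ d ∈ n.divisors, d ^ 3 := by
  rw [← card_R hn, ← Set.ncard_image_of_injective _ half_inj]
  congr 1
  ext t
  simp only [Set.mem_ofPred_eq, mem_OLat, Set.mem_image, R]
  constructor
  · rintro ⟨⟨v, hv, rfl⟩, h⟩
    exact ⟨v, ⟨hv, (norm_half v n).1 h⟩, rfl⟩
  · rintro ⟨v, ⟨hv, h⟩, rfl⟩
    exact ⟨⟨v, hv, rfl⟩, (norm_half v n).2 h⟩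

end E8

/-- The number of integral Cayley numbers of norm `n` is `240·σ₃(n)` for every `n ≥ 1`;
in particular there are exactly 240 elements of norm 1. -/
theorem card_OLat_norm_eq :
    (∀ n : ℕ, 0 < n →
      {t : Octo | t ∈ OLat ∧ octN t = n}.ncard = 240 * ∑ d ∈ n.divisors, d ^ 3) ∧
    {t : Octo | t ∈ OLat ∧ octN t = 1}.ncard = 240 := by
  refine ⟨fun n hn => E8.card_set hn, ?_⟩
  have := E8.card_set (n := 1) one_pos
  simpa using this
end
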